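/- Let K be a number field and k ≥ 1 an integer. Every homeomorphism f : 𝕏_{K,k} → 𝕏_{K,k} satisfying f(t + X) = t + f(X) for all t ∈ 𝓞_K and X ∈ 𝕏_{K,k} is a translation: there exists s ∈ 𝓞_K such that f(X) = s + X for all X ∈ 𝕏_{K,k}. -/

import Mathlib

open NumberField

/-- The product (Cantor) topology on the power set `𝒫(G) ≅ {0,1}^G`. -/
noncomputable instance powerSetTopology (G : Type*) : TopologicalSpace (Set G) :=
  TopologicalSpace.induced
    (fun (S : Set G) (g : G) => @decide (g ∈ S) (Classical.propDecidable _))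
    inferInstance

/-- The shift space `𝕏_{K,k}` of admissible sets: subsets of `𝓞 K` missing at least
one residue class modulo `𝔭^k` for every nonzero prime ideal `𝔭`. -/
def admissibleSets (K : Type*) [Field K] [NumberField K] (k : ℕ) : Set (Set (𝓞 K)) :=
  {X | ∀ P : Ideal (𝓞 K), P.IsPrime → P ≠ ⊥ → ∃ c : 𝓞 K, ∀ y ∈ X, y - c ∉ P ^ k}

theorem aux_local {K : Type*} [Field K] [NumberField K] {k : ℕ}
    (f : ↥(admissibleSets K k) → ↥(admissibleSets K k)) (hc : Continuous f)
    (X : ↥(admissibleSets K k)) (w : 𝓞 K) :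
    ∃ W : Finset (𝓞 K), ∀ X' : ↥(admissibleSets K k),
      (∀ v ∈ W, (v ∈ (X' : Set (𝓞 K)) ↔ v ∈ (X : Set (𝓞 K)))) →
      (w ∈ (f X' : Set (𝓞 K)) ↔ w ∈ (f X : Set (𝓞 K))) := by
  classical
  let e : Set (𝓞 K) → (𝓞 K → Bool) :=
    fun S g => @decide (g ∈ S) (Classical.propDecidable _)
  have he : Continuous e := continuous_induced_dom
  have h1 : Continuous (fun X' : ↥(admissibleSets K k) => e (f X' : Set (𝓞 K)) w) :=
    (continuous_apply w).comp (he.comp (continuous_subtype_val.comp hc))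
  have h2 : IsOpen {X' : ↥(admissibleSets K k) |
      e (f X' : Set (𝓞 K)) w = e (f X : Set (𝓞 K)) w} :=
    (isOpen_discrete {e (f X : Set (𝓞 K)) w}).preimage h1
  obtain ⟨U, hU, hUe⟩ := isOpen_induced_iff.1 h2
  obtain ⟨V, hV, hVe⟩ := isOpen_induced_iff.1 hU
  have hXU : (X : Set (𝓞 K)) ∈ U := by
    have : X ∈ (Subtype.val ⁻¹' U : Set ↥(admissibleSets K k)) := by rw [hUe]; rfl
    exact this
  have hXV : e (X : Set (𝓞 K)) ∈ V := by
    rw [← hVe] at hXU; exact hXU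
  obtain ⟨I, u, hu, huV⟩ := isOpen_pi_iff.1 hV _ hXV
  refine ⟨I, fun X' hX' => ?_⟩
  have h3 : e (X' : Set (𝓞 K)) ∈ V := by
    apply huV
    intro v hv
    have h4 : e (X' : Set (𝓞 K)) v = e (X : Set (𝓞 K)) v := by
      simp only [e, decide_eq_decide]
      exact hX' v hv
    rw [h4]
    exact (hu v hv).2
  have h5 : (X' : Set (𝓞 K)) ∈ U := by rw [← hVe]; exact h3
  have h6 : X' ∈ (Subtype.val ⁻¹' U : Set ↥(admissibleSets K k)) := h5
  rw [hUe] at h6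
  have h7 : e (f X' : Set (𝓞 K)) w = e (f X : Set (𝓞 K)) w := h6
  simpa only [e, decide_eq_decide] using h7

theorem aux_prime {K : Type*} [Field K] [NumberField K] (d : 𝓞 K) (hd : d ≠ 0) :
    ∃ P : Ideal (𝓞 K), P.IsPrime ∧ P ≠ ⊥ ∧ d ∉ P := by
  set m := Ideal.absNorm (Ideal.span {d}) with hm
  have hm0 : m ≠ 0 := by
    rw [hm, Ne, Ideal.absNorm_eq_zero_iff]; simpa using hd
  have hmem : (m : 𝓞 K) ∈ Ideal.span {d} := Ideal.absNorm_mem _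
  have hne : Ideal.span {((2 * m + 1 : ℕ) : 𝓞 K)} ≠ ⊤ := by
    intro h
    have := Ideal.absNorm_span_singleton ((2 * m + 1 : ℕ) : 𝓞 K)
    rw [h, Ideal.absNorm_top] at this
    have h2 : Algebra.norm ℤ ((2 * m + 1 : ℕ) : 𝓞 K) =
        ((2 * m + 1 : ℕ) : ℤ) ^ Module.finrank ℤ (𝓞 K) := by
      have := Algebra.norm_algebraMap_of_basis (RingOfIntegers.basis K) ((2 * m + 1 : ℕ) : ℤ)
      rw [← Module.finrank_eq_card_basis (RingOfIntegers.basis K)] at this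
      simpa using this
    rw [h2, Int.natAbs_pow, Int.natAbs_natCast] at this
    have h3 : Module.finrank ℤ (𝓞 K) ≠ 0 := Module.finrank_pos.ne'
    have h4 := (pow_eq_one_iff.1 this.symm).resolve_right h3
    omega
  obtain ⟨P, hP, hle⟩ := Ideal.exists_le_maximal _ hne
  have h1 : ((2 * m + 1 : ℕ) : 𝓞 K) ∈ P := hle (Ideal.mem_span_singleton_self _)
  refine ⟨P, hP.isPrime, ?_, ?_⟩
  · rintro rfl
    rw [Ideal.mem_bot, Nat.cast_eq_zero] at h1
    omega
  · intro hdP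
    have h2 : (m : 𝓞 K) ∈ P := (Ideal.span_singleton_le_iff_mem P).2 hdP hmem
    apply hP.ne_top
    rw [Ideal.eq_top_iff_one]
    have : (1 : 𝓞 K) = ((2 * m + 1 : ℕ) : 𝓞 K) - 2 * m := by push_cast; ring
    rw [this]
    exact P.sub_mem h1 (P.mul_mem_left _ h2)

theorem aux_sparse {R : Type*} [CommRing R] {ι : Type*} (S : ι → Set R)
    (hS : ∀ i, (S i).Infinite) (V W : Finset R) (T : Finset ι) :
    ∃ z : ι → R, ∀ i ∈ T, z i ∈ S i ∧ z i ∉ V ∧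
      ∀ j ∈ T, j ≠ i → z j - z i ∉ W := by
  classical
  induction T using Finset.induction_on with
  | empty => exact ⟨fun _ => 0, by simp⟩
  | insert a T ha ih =>
    obtain ⟨z, hz⟩ := ih
    let B : Finset R := V ∪ (T ×ˢ W).image (fun p => z p.1 + p.2) ∪
      (T ×ˢ W).image (fun p => z p.1 - p.2)
    obtain ⟨x, hx, hxB⟩ := (hS a).exists_notMem_finset B
    simp only [B, Finset.mem_union, Finset.mem_image, Finset.mem_product, not_or, not_exists,
      not_and, Prod.forall] at hxB
    obtain ⟨⟨hxV, hx1⟩, hx2⟩ := hxB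
    refine ⟨Function.update z a x, fun i hi => ?_⟩
    rcases Finset.mem_insert.1 hi with rfl | hiT
    · rw [Function.update_self]
      refine ⟨hx, hxV, fun j hj hji => ?_⟩
      rw [Function.update_of_ne hji]
      have hjT : j ∈ T := (Finset.mem_insert.1 hj).resolve_left hji
      intro hw
      exact hx2 j _ ⟨hjT, hw⟩ (by ring)
    · have hia : i ≠ a := fun h => ha (h ▸ hiT)
      rw [Function.update_of_ne hia]
      obtain ⟨h1, h2, h3⟩ := hz i hiT
      refine ⟨h1, h2, fun j hj hji => ?_⟩
      rcases Finset.mem_insert.1 hj with rfl | hj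
      · rw [Function.update_self]
        intro hw
        exact hx1 i _ ⟨hiT, hw⟩ (by ring)
      · have hja : j ≠ a := fun h => ha (h ▸ hj)
        rw [Function.update_of_ne hja]
        exact h3 j hj hji

theorem aux_crt {K : Type*} [Field K] [NumberField K] (k : ℕ)
    (B : Finset (Ideal (𝓞 K))) (hB : ∀ q ∈ B, q.IsPrime ∧ q ≠ ⊥) (x : Ideal (𝓞 K) → 𝓞 K) :
    {z : 𝓞 K | ∀ q ∈ B, z - x q ∈ q ^ k}.Infinite := by
  classical
  obtain ⟨z0, hz0⟩ := IsDedekindDomain.exists_forall_sub_mem_ideal (s := B) (fun q => q)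
    (fun _ => k) (fun q hq => Ideal.prime_of_isPrime (hB q hq).2 (hB q hq).1)
    (fun i _ j _ hij => hij) (fun q => x q)
  have hJ : (∏ q ∈ B, q ^ k) ≠ (⊥ : Ideal (𝓞 K)) := by
    rw [← Ideal.zero_eq_bot, Finset.prod_ne_zero_iff]
    intro q hq
    exact pow_ne_zero _ (hB q hq).2
  obtain ⟨y, hy, hy0⟩ := Submodule.exists_mem_ne_zero_of_ne_bot hJ
  refine Set.infinite_of_injective_forall_mem (f := fun n : ℕ => z0 + n * y) ?_ ?_
  · intro a b hab
    have : (a : 𝓞 K) * y = b * y := add_left_cancel hab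
    exact_mod_cast mul_right_cancel₀ hy0 this
  · intro n q hq
    have h1 : y ∈ q ^ k := Ideal.le_of_dvd (Finset.dvd_prod_of_mem _ hq) hy
    have : z0 + n * y - x q = (z0 - x q) + n * y := by ring
    rw [this]
    exact Ideal.add_mem _ (hz0 q hq) (Ideal.mul_mem_left _ _ h1)

/-- Extension of a finite admissible set avoiding `c` by sparse points. -/
theorem aux_ext {K : Type*} [Field K] [NumberField K] (k : ℕ) (hk : 1 ≤ k)
    (X : Finset (𝓞 K)) (hX : (X : Set (𝓞 K)) ∈ admissibleSets K k) (c : 𝓞 K) (hc : c ∉ X)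
    (V W : Finset (𝓞 K)) :
    ∃ (P : Ideal (𝓞 K)) (Z : Finset (𝓞 K)), P.IsPrime ∧ P ≠ ⊥ ∧
      ((X : Set (𝓞 K)) ∪ Z) ∈ admissibleSets K k ∧
      (∀ r : 𝓞 K, r - c ∉ P ^ k → ∃ z ∈ Z, z - r ∈ P ^ k) ∧
      (∀ z ∈ Z, z ∉ V) ∧ (∀ z ∈ Z, ∀ z' ∈ Z, z' ≠ z → z' - z ∉ W) := by
  classical
  obtain ⟨P, hP, hP0, hPd⟩ := aux_prime (∏ x ∈ X, (x - c)) (by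
    rw [Finset.prod_ne_zero_iff]
    intro x hx h
    exact hc (sub_eq_zero.1 h ▸ hx))
  have hXP : ∀ x ∈ X, x - c ∉ P ^ k := by
    intro x hx h
    apply hPd
    exact Ideal.mem_of_dvd _ (Finset.dvd_prod_of_mem _ hx) (Ideal.pow_le_self (by omega) h)
  have hPk : P ^ k ≠ ⊥ := pow_ne_zero _ hP0
  have : Finite (𝓞 K ⧸ P ^ k) := Ideal.finiteQuotientOfFreeOfNeBot _ hPk
  have := Fintype.ofFinite (𝓞 K ⧸ P ^ k)
  let N := X.card + Fintype.card (𝓞 K ⧸ P ^ k)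
  have hfin : {q : Ideal (𝓞 K) | q.IsPrime ∧ q ≠ ⊥ ∧ Ideal.absNorm q ≤ N}.Finite :=
    (Ideal.finite_setOfPred_absNorm_le N).subset (fun q hq => hq.2.2)
  let B : Finset (Ideal (𝓞 K)) := insert P hfin.toFinset
  have hB : ∀ q ∈ B, q.IsPrime ∧ q ≠ ⊥ := by
    intro q hq
    rcases Finset.mem_insert.1 hq with rfl | hq
    · exact ⟨hP, hP0⟩
    · exact ⟨(hfin.mem_toFinset.1 hq).1, (hfin.mem_toFinset.1 hq).2.1⟩
  have hcl : ∀ q : Ideal (𝓞 K), ∃ c : 𝓞 K, q.IsPrime → q ≠ ⊥ →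
      ∀ y ∈ (X : Set (𝓞 K)), y - c ∉ q ^ k := by
    intro q
    by_cases h : q.IsPrime ∧ q ≠ ⊥
    · obtain ⟨c, hc⟩ := hX q h.1 h.2
      exact ⟨c, fun _ _ => hc⟩
    · exact ⟨0, fun h1 h2 => absurd ⟨h1, h2⟩ h⟩
  choose cl hcl using hcl
  let S : (𝓞 K ⧸ P ^ k) → Set (𝓞 K) := fun r =>
    {z | ∀ q ∈ B, z - (if q = P then Quotient.out r else cl q + 1) ∈ q ^ k}
  obtain ⟨z, hz⟩ := aux_sparse S (fun r => aux_crt k B hB _) V W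
    (Finset.univ.erase (Ideal.Quotient.mk (P ^ k) c))
  have hzP : ∀ r, r ≠ Ideal.Quotient.mk (P ^ k) c → Ideal.Quotient.mk (P ^ k) (z r) = r := by
    intro r hr
    have h1 := (hz r (by simpa using hr)).1 P (Finset.mem_insert_self _ _)
    rw [if_pos rfl, ← Ideal.Quotient.eq] at h1
    rw [h1]
    exact Quotient.out_eq r
  refine ⟨P, (Finset.univ.erase (Ideal.Quotient.mk (P ^ k) c)).image z, hP, hP0, ?_, ?_, ?_, ?_⟩
  · intro q hq hq0
    by_cases hqP : q = P
    · subst hqP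
      refine ⟨c, fun y hy => ?_⟩
      rcases hy with hy | hy
      · exact hXP y hy
      · simp only [Finset.coe_image, Set.mem_image, Finset.mem_coe, Finset.mem_erase,
          Finset.mem_univ, and_true] at hy
        obtain ⟨r, hr, rfl⟩ := hy
        rw [← Ideal.Quotient.eq, hzP r hr]
        exact hr
    · by_cases hqB : q ∈ B
      · refine ⟨cl q, fun y hy => ?_⟩
        rcases hy with hy | hy
        · exact hcl q hq hq0 y hy
        · simp only [Finset.coe_image, Set.mem_image, Finset.mem_coe] at hy
          obtain ⟨r, hr, rfl⟩ := hy
          intro h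
          have h1 := (hz r hr).1 q hqB
          rw [if_neg hqP] at h1
          have h2 : (1 : 𝓞 K) ∈ q ^ k := by
            have := Ideal.sub_mem _ h h1
            have e : z r - cl q - (z r - (cl q + 1)) = 1 := by ring
            rwa [e] at this
          exact hq.ne_top ((Ideal.eq_top_iff_one q).2 (Ideal.pow_le_self (by omega) h2))
      · have hqk : q ^ k ≠ ⊥ := pow_ne_zero _ hq0
        have : Finite (𝓞 K ⧸ q ^ k) := Ideal.finiteQuotientOfFreeOfNeBot _ hqk
        have := Fintype.ofFinite (𝓞 K ⧸ q ^ k)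
        have hbig : N < Fintype.card (𝓞 K ⧸ q ^ k) := by
          have h1 : N < Ideal.absNorm q := by
            by_contra h
            exact hqB (Finset.mem_insert_of_mem
              (hfin.mem_toFinset.2 ⟨hq, hq0, not_lt.1 h⟩))
          have h2 : Fintype.card (𝓞 K ⧸ q ^ k) = Ideal.absNorm (q ^ k) := by
            rw [Ideal.absNorm_apply, Submodule.cardQuot_apply, Nat.card_eq_fintype_card]
          rw [h2, map_pow]
          exact h1.trans_le (Nat.le_self_pow (by omega) _)
        set Y : Finset (𝓞 K) := X ∪
          (Finset.univ.erase (Ideal.Quotient.mk (P ^ k) c)).image z with hY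
        have hYc : (Y.image (Ideal.Quotient.mk (q ^ k))).card < Fintype.card (𝓞 K ⧸ q ^ k) := by
          refine lt_of_le_of_lt ?_ hbig
          refine Finset.card_image_le.trans ((Finset.card_union_le _ _).trans ?_)
          refine Nat.add_le_add_left (Finset.card_image_le.trans ?_) _
          exact Finset.card_le_univ _
        obtain ⟨r, hr⟩ : ∃ r, r ∉ Y.image (Ideal.Quotient.mk (q ^ k)) := by
          by_contra! h
          have := Finset.eq_univ_iff_forall.2 h
          rw [this, Finset.card_univ] at hYc
          exact lt_irrefl _ hYc
        obtain ⟨d, rfl⟩ := Ideal.Quotient.mk_surjective r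
        refine ⟨d, fun y hy h => hr ?_⟩
        rw [← Ideal.Quotient.eq] at h
        rw [← h]
        apply Finset.mem_image_of_mem
        rw [← Finset.coe_union] at hy
        exact hy
  · intro r hr
    have hr' : Ideal.Quotient.mk (P ^ k) r ≠ Ideal.Quotient.mk (P ^ k) c := by
      rwa [Ne, Ideal.Quotient.eq]
    refine ⟨z (Ideal.Quotient.mk (P ^ k) r), Finset.mem_image_of_mem _ (by simpa using hr'), ?_⟩
    rw [← Ideal.Quotient.eq, hzP _ hr']
  · intro y hy
    obtain ⟨r, hr, rfl⟩ := Finset.mem_image.1 hy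
    exact (hz r hr).2.1
  · intro y hy y' hy' hne
    obtain ⟨r, hr, rfl⟩ := Finset.mem_image.1 hy
    obtain ⟨r', hr', rfl⟩ := Finset.mem_image.1 hy'
    exact (hz r hr).2.2 r' hr' (fun h => hne (by rw [h]))

theorem aux_subset {K : Type*} [Field K] [NumberField K] {k : ℕ}
    {X Y : Set (𝓞 K)} (h : X ⊆ Y) (hY : Y ∈ admissibleSets K k) : X ∈ admissibleSets K k :=
  fun P hP hP0 => (hY P hP hP0).imp fun _ hc y hy => hc y (h hy)

theorem aux_trans {K : Type*} [Field K] [NumberField K] {k : ℕ}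
    {X : Set (𝓞 K)} (t : 𝓞 K) (hX : X ∈ admissibleSets K k) :
    (t + ·) '' X ∈ admissibleSets K k := by
  intro P hP hP0
  obtain ⟨c, hc⟩ := hX P hP hP0
  refine ⟨t + c, ?_⟩
  rintro _ ⟨y, hy, rfl⟩
  simpa using hc y hy

theorem aux_main {K : Type*} [Field K] [NumberField K]
    (k : ℕ) (hk : 1 ≤ k)
    (f : ↥(admissibleSets K k) → ↥(admissibleSets K k)) (hcont : Continuous f)
    (hf : ∀ (t : 𝓞 K) (X Y : ↥(admissibleSets K k)),
      (Y : Set (𝓞 K)) = (t + ·) '' (X : Set (𝓞 K)) →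
      ((f Y : Set (𝓞 K))) = (t + ·) '' ((f X : Set (𝓞 K))))
    (O : ↥(admissibleSets K k)) (hO : (O : Set (𝓞 K)) = {0})
    (X : ↥(admissibleSets K k)) (hX : (X : Set (𝓞 K)).Finite) (y a : 𝓞 K)
    (hy : y ∈ (f X : Set (𝓞 K))) (ha : a ∈ (f O : Set (𝓞 K))) : y - a ∈ (X : Set (𝓞 K)) := by
  classical
  by_contra hya
  obtain ⟨V, hV⟩ := aux_local f hcont X y
  obtain ⟨W, hW⟩ := aux_local f hcont O a
  have hXe : ((hX.toFinset : Finset (𝓞 K)) : Set (𝓞 K)) = X := hX.coe_toFinset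
  obtain ⟨P, Z, hP, hP0, hadm, hcov, hZV, hZW⟩ := aux_ext k hk hX.toFinset
    (by rw [hXe]; exact X.2) (y - a) (by simpa using hya)
    (V ∪ (hX.toFinset ×ˢ W).image (fun p => p.1 - p.2)) W
  rw [hXe] at hadm
  let X' : ↥(admissibleSets K k) := ⟨_, hadm⟩
  have h1 : y ∈ (f X' : Set (𝓞 K)) := by
    rw [hV X']
    · exact hy
    · intro v hv
      constructor
      · rintro (h | h)
        · exact h
        · exact absurd (Finset.mem_union_left _ hv) (hZV v h)
      · exact fun h => Or.inl h
  have h2 : ∀ z ∈ Z, z + a ∈ (f X' : Set (𝓞 K)) := by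
    intro z hz
    let T : ↥(admissibleSets K k) := ⟨_, aux_trans (-z) hadm⟩
    have hT : (X' : Set (𝓞 K)) = (z + ·) '' (T : Set (𝓞 K)) := by
      ext v
      constructor
      · exact fun hv => ⟨-z + v, ⟨v, hv, rfl⟩, by simp⟩
      · rintro ⟨_, ⟨x, hx, rfl⟩, rfl⟩
        simpa [X'] using hx
    rw [hf z T X' hT]
    refine ⟨a, ?_, rfl⟩
    rw [hW T]
    · exact ha
    · intro v hv
      rw [hO, Set.mem_singleton_iff]
      constructor
      · rintro ⟨x, hx | hx, rfl⟩
        · exfalso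
          apply hZV z hz
          apply Finset.mem_union_right
          refine Finset.mem_image.2 ⟨(x, -z + x), ?_, by simp⟩
          exact Finset.mem_product.2 ⟨hX.mem_toFinset.2 hx, hv⟩
        · by_cases hxz : x = z
          · subst hxz; simp
          · exfalso
            apply hZW z hz x hx hxz
            have : x - z = -z + x := by ring
            rw [this]; exact hv
      · rintro rfl
        exact ⟨z, Or.inr hz, by simp⟩
  obtain ⟨c, hc⟩ := (f X').2 P hP hP0
  by_cases hcy : (c - a) - (y - a) ∈ P ^ k
  · apply hc y h1
    have : y - c = -((c - a) - (y - a)) := by ring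
    rw [this]
    exact Ideal.neg_mem_iff _ |>.2 hcy
  · obtain ⟨z, hz, hzc⟩ := hcov (c - a) hcy
    apply hc _ (h2 z hz)
    have : z + a - c = z - (c - a) := by ring
    rwa [this]

theorem aux_singleton {K : Type*} [Field K] [NumberField K]
    (k : ℕ) (hk : 1 ≤ k) (s : 𝓞 K) : ({s} : Set (𝓞 K)) ∈ admissibleSets K k := by
  intro P hP hP0
  refine ⟨s - 1, ?_⟩
  rintro y rfl h
  have h2 : (1 : 𝓞 K) ∈ P ^ k := by simpa using h
  exact hP.ne_top ((Ideal.eq_top_iff_one P).2 (Ideal.pow_le_self (by omega) h2))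

/-- Every symmetry of the shift space `𝔻_{K,k}` (a self-homeomorphism of `𝕏_{K,k}`
commuting with the translation action of `𝓞 K`) is itself a translation. -/
theorem symmetries_are_translations {K : Type*} [Field K] [NumberField K]
    (k : ℕ) (hk : 1 ≤ k)
    (f : ↥(admissibleSets K k) ≃ₜ ↥(admissibleSets K k))
    (hf : ∀ (t : 𝓞 K) (X Y : ↥(admissibleSets K k)),
      (Y : Set (𝓞 K)) = (t + ·) '' (X : Set (𝓞 K)) →
      ((f Y : Set (𝓞 K))) = (t + ·) '' ((f X : Set (𝓞 K)))) :
    ∃ s : 𝓞 K, ∀ X : ↥(admissibleSets K k),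
      ((f X : Set (𝓞 K))) = (s + ·) '' (X : Set (𝓞 K)) := by
  classical
  let O : ↥(admissibleSets K k) := ⟨{0}, aux_singleton k hk 0⟩
  let E : ↥(admissibleSets K k) := ⟨∅, fun P _ _ => ⟨0, by simp⟩⟩
  have hE : (f E : Set (𝓞 K)) = ∅ := by
    by_contra hne
    obtain ⟨x, hx⟩ := Set.nonempty_iff_ne_empty.2 hne
    have hall : ∀ y, y ∈ (f E : Set (𝓞 K)) := by
      intro y
      rw [hf (y - x) E E (by simp [E])]
      exact ⟨x, hx, by simp⟩
    obtain ⟨P, hP, hP0, -⟩ := aux_prime (K := K) 1 one_ne_zero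
    obtain ⟨c, hc⟩ := (f E).2 P hP hP0
    exact hc c (hall c) (by simp)
  have hOne : (f O : Set (𝓞 K)).Nonempty := by
    rw [Set.nonempty_iff_ne_empty]
    intro h
    have h1 : f O = f E := Subtype.ext (h.trans hE.symm)
    have h2 := congrArg Subtype.val (f.injective h1)
    exact Set.singleton_ne_empty _ h2
  obtain ⟨s, hs⟩ := hOne
  have hfO : (f O : Set (𝓞 K)) = {s} := by
    ext y
    constructor
    · intro hy
      have := aux_main k hk f f.continuous hf O rfl O (Set.finite_singleton _) y s hy hs
      exact sub_eq_zero.1 this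
    · rintro rfl; exact hs
  have hg : ∀ (t : 𝓞 K) (X Y : ↥(admissibleSets K k)),
      (Y : Set (𝓞 K)) = (t + ·) '' (X : Set (𝓞 K)) →
      ((f.symm Y : Set (𝓞 K))) = (t + ·) '' ((f.symm X : Set (𝓞 K))) := by
    intro t X Y hXY
    let T : ↥(admissibleSets K k) := ⟨_, aux_trans t (f.symm X).2⟩
    have h1 := hf t (f.symm X) T rfl
    rw [f.apply_symm_apply, ← hXY] at h1
    have h2 : f T = Y := Subtype.ext h1
    rw [← h2, f.symm_apply_apply]
  have hgO : -s ∈ (f.symm O : Set (𝓞 K)) := by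
    rw [hg (-s) (f O) O (by rw [hfO]; simp [O]), f.symm_apply_apply]
    exact ⟨0, rfl, by simp⟩
  have hfinite : ∀ X : ↥(admissibleSets K k), (X : Set (𝓞 K)).Finite →
      (f X : Set (𝓞 K)) = (s + ·) '' (X : Set (𝓞 K)) := by
    intro X hX
    have h1 : (f X : Set (𝓞 K)) ⊆ (s + ·) '' (X : Set (𝓞 K)) := fun y hy =>
      ⟨y - s, aux_main k hk f f.continuous hf O rfl X hX y s hy hs, by simp⟩
    refine h1.antisymm ?_
    rintro _ ⟨x, hx, rfl⟩
    have h2 := aux_main k hk f.symm f.symm.continuous hg O rfl (f X)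
      ((hX.image _).subset h1) x (-s) (by rw [f.symm_apply_apply]; exact hx) hgO
    have e : x - -s = s + x := by ring
    rw [e] at h2
    exact h2
  refine ⟨s, fun X => ?_⟩
  ext w
  obtain ⟨W, hW⟩ := aux_local f f.continuous X w
  let X' : ↥(admissibleSets K k) :=
    ⟨(X : Set (𝓞 K)) ∩ ((insert (w - s) W : Finset (𝓞 K)) : Set (𝓞 K)),
      aux_subset Set.inter_subset_left X.2⟩
  rw [← hW X', hfinite X' ((Finset.finite_toSet _).subset Set.inter_subset_right)]
  · constructor
    · rintro ⟨x, hx, rfl⟩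
      exact ⟨x, hx.1, rfl⟩
    · rintro ⟨x, hx, rfl⟩
      exact ⟨x, ⟨hx, by simp⟩, rfl⟩
  · intro v hv
    exact ⟨fun h => h.1, fun h => ⟨h, by simp [hv]⟩⟩
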